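/- arXiv:2503.11418 — 2 statements merged into one kernel-verified Lean document; each statement's English description precedes it below -/
import Mathlib

section
/- Fix n ≥ 2, t ∈ ℝ, and a function d ↦ r₀(d) > 0 with lim_{d→∞} (r₀(d)² − d/12)/√d = t. For each d, let X₁, …, X_n be i.i.d. uniform random points in [0,1]^d with torus distance ρ_T, and let G_d be the random graph on vertices {1,…,n} with an edge between i and j exactly when ρ_T(X_i, X_j) ≤ r₀(d). Then for every labelled graph g on n vertices with k edges, P(G_d = g) → p̄(t)^k (1 − p̄(t))^{n(n−1)/2 − k} as d → ∞, where p̄(t) = P(W ≤ t) for W a centered Gaussian random variable of variance 1/180. In other words, the hard random geometric graph ensemble on 𝕋^d with uniform nodes converges in distribution to the Erdős–Rényi ensemble G(n, p̄(t)). -/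
open MeasureTheory ProbabilityTheory Filter Topology

/-- The uniform probability measure on `[0,1]`. -/
noncomputable def unif01 : Measure ℝ := volume.restrict (Set.Icc (0:ℝ) 1)

/-- The law of `n` i.i.d. uniform random points in `[0,1]^d`. -/
noncomputable def cubeLaw (n d : ℕ) : Measure (Fin n → Fin d → ℝ) :=
  Measure.pi fun _ => Measure.pi fun _ => unif01

/-- The distance on the `d`-dimensional unit torus. -/
noncomputable def torusDist (d : ℕ) (x y : Fin d → ℝ) : ℝ :=
  Real.sqrt (∑ k : Fin d, (min |x k - y k| (1 - |x k - y k|)) ^ 2)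

/-- `p̄(t) = P(W ≤ t)` for `W` a centered Gaussian of variance `1/180`. -/
noncomputable def pbar (t : ℝ) : ℝ :=
  (gaussianReal 0 (1/180 : NNReal) (Set.Iic t)).toReal

/-!
After centring at `d / 12` and dividing by `√d`, the squared torus distance of two nodes is a
normalised sum, over the `d` i.i.d. coordinates, of the kernel
`h x y = (min |x - y| (1 - |x - y|)) ^ 2 - 1 / 12`. By translation invariance of the circle, `h`
averages to zero in either argument with the other one fixed. Given two distinct pairs of
vertices, integrating out an endpoint of one that is missing from the other shows that the values
of `h` on them are uncorrelated, even when the pairs share a vertex. The central limit theorem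
therefore gives jointly *independent* Gaussian limits, of variance `∫ h² = 1 / 180`, for all pairs
at once, and the portmanteau theorem turns this into convergence of the probability of each
pattern of edges, since the thresholds converge to `t` and Gaussian laws have no atoms.
-/

section ProductMeasure

theorem measurePreserving_update {ι : Type*} [Fintype ι] [DecidableEq ι] {X : ι → Type*}
    [∀ i, MeasurableSpace (X i)] (μ : ∀ i, Measure (X i)) [∀ i, SigmaFinite (μ i)] (i : ι)
    [IsProbabilityMeasure (μ i)] :
    MeasurePreserving (fun p : (∀ j, X j) × X i => Function.update p.1 i p.2)
      ((Measure.pi μ).prod (μ i)) (Measure.pi μ) := by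
  refine ⟨measurable_update', (Measure.pi_eq fun s hs => ?_).symm⟩
  have preimage_box : (fun p : (∀ j, X j) × X i => Function.update p.1 i p.2) ⁻¹' Set.univ.pi s =
      Set.univ.pi (Function.update s i Set.univ) ×ˢ s i := by
    ext ⟨x, y⟩
    simp only [Set.mem_preimage, Set.mem_univ_pi, Set.mem_prod]
    refine ⟨fun h => ⟨fun j => ?_, by simpa using h i⟩, fun h j => ?_⟩ <;>
      obtain rfl | hj := eq_or_ne j i
    · simp
    · simpa [hj] using h j
    · simpa using h.2
    · simpa [hj] using h.1 j
  rw [Measure.map_apply measurable_update' (.univ_pi hs), preimage_box, Measure.prod_prod,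
    Measure.pi_pi, ← Finset.mul_prod_erase _ _ (Finset.mem_univ i),
    ← Finset.mul_prod_erase _ (fun j => μ j (s j)) (Finset.mem_univ i), Function.update_self,
    measure_univ, one_mul, mul_comm]
  congr 1
  exact Finset.prod_congr rfl fun j hj => by rw [Function.update_of_ne (Finset.ne_of_mem_erase hj)]

theorem integral_pi_eq_integral_integral_update {ι : Type*} [Fintype ι] [DecidableEq ι]
    {X : ι → Type*} [∀ i, MeasurableSpace (X i)] (μ : ∀ i, Measure (X i))
    [∀ i, SigmaFinite (μ i)] (i : ι) [IsProbabilityMeasure (μ i)] {E : Type*}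
    [NormedAddCommGroup E] [NormedSpace ℝ E] {F : (∀ j, X j) → E}
    (hF : Integrable F (Measure.pi μ)) :
    ∫ u, F u ∂Measure.pi μ = ∫ u, ∫ x, F (Function.update u i x) ∂μ i ∂Measure.pi μ := by
  have update_mp := measurePreserving_update μ i
  rw [← integral_prod (fun p : (∀ j, X j) × X i => F (Function.update p.1 i p.2))
    (update_mp.integrable_comp_of_integrable hF)]
  nth_rw 1 [← update_mp.map_eq]
  exact integral_map update_mp.aemeasurable (update_mp.map_eq.symm ▸ hF.aestronglyMeasurable)

theorem measurePreserving_eval_prodMk {ι : Type*} [Fintype ι] {X : ι → Type*}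
    [∀ i, MeasurableSpace (X i)] (μ : ∀ i, Measure (X i)) [∀ i, IsProbabilityMeasure (μ i)]
    {i j : ι} (hij : i ≠ j) :
    MeasurePreserving (fun u : ∀ i, X i => (u i, u j)) (Measure.pi μ) ((μ i).prod (μ j)) := by
  have indep : IndepFun (fun u : ∀ i, X i => u i) (fun u => u j) (Measure.pi μ) :=
    (iIndepFun_pi (X := fun _ => id) fun _ => aemeasurable_id).indepFun hij
  refine ⟨by fun_prop, ?_⟩
  rw [(indepFun_iff_map_prod_eq_prod_map_map (measurable_pi_apply i).aemeasurable
      (measurable_pi_apply j).aemeasurable).1 indep,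
    (measurePreserving_eval μ i).map_eq, (measurePreserving_eval μ j).map_eq]

theorem measurePreserving_curry {ι κ X : Type*} [Fintype ι] [Fintype κ] [MeasurableSpace X]
    (μ : ι → κ → Measure X) [∀ i k, IsProbabilityMeasure (μ i k)] :
    MeasurePreserving (MeasurableEquiv.curry ι κ X) (Measure.pi fun p : ι × κ => μ p.1 p.2)
      (Measure.pi fun i => Measure.pi fun k => μ i k) :=
  ⟨MeasurableEquiv.measurable _, by
    simpa only [Measure.infinitePi_eq_pi] using Measure.infinitePi_map_curry μ⟩

theorem measurePreserving_swap_pi {ι κ X : Type*} [Fintype ι] [Fintype κ] [MeasurableSpace X]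
    (μ : ι → κ → Measure X) [∀ i k, IsProbabilityMeasure (μ i k)] :
    MeasurePreserving (Function.swap : (ι → κ → X) → κ → ι → X)
      (Measure.pi fun i => Measure.pi fun k => μ i k)
      (Measure.pi fun k => Measure.pi fun i => μ i k) := by
  have relabel := measurePreserving_piCongrLeft (fun p : κ × ι => μ p.2 p.1) (Equiv.prodComm ι κ)
  exact (measurePreserving_curry fun k i => μ i k).comp
    (relabel.comp (measurePreserving_curry μ).symm)

end ProductMeasure

section Convergence

theorem map_comp_measurePreserving {Ω₁ Ω₂ E : Type*} [MeasurableSpace Ω₁] [MeasurableSpace Ω₂]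
    [MeasurableSpace E] {μ₁ : Measure Ω₁} {μ₂ : Measure Ω₂} {X : Ω₂ → E} (hX : AEMeasurable X μ₂)
    {f : Ω₁ → Ω₂} (hf : MeasurePreserving f μ₁ μ₂) : μ₁.map (fun ω => X (f ω)) = μ₂.map X := by
  rw [← hf.map_eq] at hX
  exact (AEMeasurable.map_map_of_aemeasurable hX hf.aemeasurable).symm.trans (by rw [hf.map_eq])

theorem tendstoInDistribution_comp_measurePreserving {ι Ω' E : Type*} {Ω₁ Ω₂ : ι → Type*}
    [∀ i, MeasurableSpace (Ω₁ i)] [∀ i, MeasurableSpace (Ω₂ i)] {μ₁ : ∀ i, Measure (Ω₁ i)}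
    {μ₂ : ∀ i, Measure (Ω₂ i)} [∀ i, IsProbabilityMeasure (μ₁ i)]
    [∀ i, IsProbabilityMeasure (μ₂ i)] [MeasurableSpace Ω'] {μ' : Measure Ω'}
    [IsProbabilityMeasure μ'] {l : Filter ι} [TopologicalSpace E] [MeasurableSpace E]
    [OpensMeasurableSpace E] {X : ∀ i, Ω₂ i → E} {Z : Ω' → E}
    (hX : TendstoInDistribution X l Z μ₂ μ') {f : ∀ i, Ω₁ i → Ω₂ i}
    (hf : ∀ i, MeasurePreserving (f i) (μ₁ i) (μ₂ i)) :
    TendstoInDistribution (fun i ω => X i (f i ω)) l Z μ₁ μ' where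
  forall_aemeasurable i :=
    (hX.forall_aemeasurable i).comp_quasiMeasurePreserving (hf i).quasiMeasurePreserving
  aemeasurable_limit := hX.aemeasurable_limit
  tendsto := hX.tendsto.congr fun i =>
    Subtype.ext (map_comp_measurePreserving (hX.forall_aemeasurable i) (hf i)).symm

theorem map_prodMk_const {Ω E F : Type*} [MeasurableSpace Ω] [MeasurableSpace E]
    [MeasurableSpace F] {μ : Measure Ω} [SFinite μ] {X : Ω → E} (hX : AEMeasurable X μ) (c : F) :
    μ.map (fun ω => (X ω, c)) = (μ.map X).prod (Measure.dirac c) := by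
  rw [Measure.prod_dirac, AEMeasurable.map_map_of_aemeasurable (by fun_prop) hX]
  rfl

theorem tendstoInDistribution_prodMk_const {ι Ω' E F : Type*} {Ω : ι → Type*}
    [∀ i, MeasurableSpace (Ω i)] {μ : ∀ i, Measure (Ω i)} [∀ i, IsProbabilityMeasure (μ i)]
    [MeasurableSpace Ω'] {μ' : Measure Ω'} [IsProbabilityMeasure μ'] {l : Filter ι}
    [TopologicalSpace E] [TopologicalSpace.PseudoMetrizableSpace E] [SecondCountableTopology E]
    [MeasurableSpace E] [BorelSpace E] [TopologicalSpace F]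
    [TopologicalSpace.PseudoMetrizableSpace F] [SecondCountableTopology F] [MeasurableSpace F]
    [BorelSpace F] {X : ∀ i, Ω i → E} {Z : Ω' → E} (hX : TendstoInDistribution X l Z μ μ')
    {c : ι → F} {c₀ : F} (hc : Tendsto c l (𝓝 c₀)) :
    TendstoInDistribution (fun i ω => (X i ω, c i)) l (fun ω => (Z ω, c₀)) μ μ' := by
  refine ⟨fun i => (hX.forall_aemeasurable i).prodMk aemeasurable_const,
    hX.aemeasurable_limit.prodMk aemeasurable_const, ?_⟩
  have tendsto_prod := (ProbabilityMeasure.continuous_prod.tendsto _).comp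
    (hX.tendsto.prodMk_nhds (((continuous_diracProba (X := F)).tendsto c₀).comp hc))
  refine Tendsto.congr (fun i => Subtype.ext
    (map_prodMk_const (hX.forall_aemeasurable i) (c i)).symm) (tendsto_prod.trans (le_of_eq ?_))
  exact congrArg nhds (Subtype.ext (map_prodMk_const hX.aemeasurable_limit c₀).symm)

end Convergence

section CentralLimitTheorem

open scoped RealInnerProductSpace

variable {Ω Ω' E ι : Type*} [MeasurableSpace Ω] [MeasurableSpace Ω'] {P : Measure Ω}
  {P' : Measure Ω'} [NormedAddCommGroup E] [InnerProductSpace ℝ E] [MeasurableSpace E]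
  [BorelSpace E] [Fintype ι]

theorem charFun_map_smul_eq_charFun_map_inner [SecondCountableTopology E] {X : Ω → E}
    (hX : AEMeasurable X P) (s : E) (r : ℝ) :
    charFun (P.map X) (r • s) = charFun (P.map fun ω => ⟪X ω, s⟫) r := by
  rw [charFun_apply, integral_map hX (by fun_prop), charFun_apply_real,
    integral_map (hX.inner aemeasurable_const) (by fun_prop)]
  simp only [inner_smul_right, Complex.ofReal_mul]

theorem integral_sq_sum_mul_of_uncorrelated [DecidableEq ι] {X : ι → Ω → ℝ} {v : ℝ}
    (hX : ∀ i, MemLp (X i) 2 P)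
    (hcov : ∀ i j, ∫ ω, X i ω * X j ω ∂P = if i = j then v else 0) (s : ι → ℝ) :
    ∫ ω, (∑ i, s i * X i ω) ^ 2 ∂P = v * ∑ i, s i ^ 2 := by
  have integrable_mul (i j : ι) : Integrable (fun ω => s i * s j * (X i ω * X j ω)) P :=
    ((hX i).integrable_mul (hX j)).const_mul _
  have expand (ω : Ω) :
      (∑ i, s i * X i ω) ^ 2 = ∑ i, ∑ j, s i * s j * (X i ω * X j ω) := by
    simp only [sq, Finset.sum_mul_sum, mul_mul_mul_comm]
  simp only [expand]
  rw [integral_finsetSum _ fun i _ => integrable_finsetSum _ fun j _ => integrable_mul i j]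
  simp only [integral_finsetSum _ fun j _ => integrable_mul _ j, integral_const_mul, hcov,
    mul_ite, mul_zero, Finset.sum_ite_eq, Finset.mem_univ, if_true, Finset.mul_sum]
  exact Finset.sum_congr rfl fun i _ => by ring

variable [IsProbabilityMeasure P]

theorem tendsto_charFun_map_inv_sqrt_mul_pow {X : Ω → ℝ} (hX : MemLp X 2 P) (hX0 : P[X] = 0)
    (t : ℝ) :
    Tendsto (fun d : ℕ => charFun (P.map X) ((√d)⁻¹ * t) ^ d) atTop
      (𝓝 (Complex.exp (-((∫ ω, X ω ^ 2 ∂P : ℝ) * t ^ 2) / 2))) := by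
  set v := ∫ ω, X ω ^ 2 ∂P with hv
  have v_nonneg : 0 ≤ v := integral_nonneg fun ω => sq_nonneg _
  obtain hv0 | v_pos := v_nonneg.eq_or_lt
  · have X_ae_zero : X =ᵐ[P] fun _ => 0 := by
      filter_upwards [(integral_eq_zero_iff_of_nonneg (fun ω => sq_nonneg _)
        hX.integrable_sq).1 (hv.symm.trans hv0.symm)] with ω hω
      exact pow_eq_zero_iff two_ne_zero |>.1 hω
    simp [← hv0, Measure.map_congr X_ae_zero]
  · have sq_sqrt_v : (√v) ^ 2 = v := Real.sq_sqrt v_nonneg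
    have standardized := tendsto_charFun_inv_sqrt_mul_pow (P := P) (X := fun ω => (√v)⁻¹ * X ω)
      (hX.aemeasurable.const_mul _) (by rw [integral_const_mul, hX0, mul_zero])
      (by simp only [Pi.pow_apply, mul_pow, integral_const_mul, inv_pow, sq_sqrt_v, ← hv,
            inv_mul_cancel₀ v_pos.ne']) (√v * t)
    have exponent_eq : ((√v * t : ℝ) : ℂ) ^ 2 = (v : ℂ) * t ^ 2 := by
      rw [← Complex.ofReal_pow, mul_pow, sq_sqrt_v]
      push_cast
      rfl
    rw [exponent_eq] at standardized
    refine standardized.congr fun d => ?_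
    rw [charFun_map_mul_comp hX.aemeasurable]
    congr 2
    have := (Real.sqrt_pos.2 v_pos).ne'
    field_simp

theorem charFun_map_inv_sqrt_smul_sum_pi [SecondCountableTopology E] {X : Ω → E}
    (hX : AEMeasurable X P) (d : ℕ) (s : E) :
    charFun ((Measure.pi fun _ : Fin d => P).map fun ω => (√d)⁻¹ • ∑ k, X (ω k)) s =
      charFun (P.map fun ω => ⟪X ω, s⟫) (√d)⁻¹ ^ d := by
  have eval_mp (k : Fin d) := measurePreserving_eval (fun _ : Fin d => P) k
  have X_eval_aemeasurable (k : Fin d) :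
      AEMeasurable (fun ω : Fin d → Ω => X (ω k)) (Measure.pi fun _ => P) :=
    hX.comp_quasiMeasurePreserving (eval_mp k).quasiMeasurePreserving
  have law_eval (k : Fin d) : (Measure.pi fun _ : Fin d => P).map (fun ω => X (ω k)) = P.map X :=
    map_comp_measurePreserving hX (eval_mp k)
  rw [charFun_map_smul_comp (Finset.aemeasurable_fun_sum _ fun k _ => X_eval_aemeasurable k),
    (iIndepFun_pi fun _ => hX).charFun_map_fun_sum_eq_prod X_eval_aemeasurable]
  simp only [law_eval, Finset.prod_const, Finset.card_univ, Fintype.card_fin, Pi.pow_apply,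
    charFun_map_smul_eq_charFun_map_inner hX]

theorem tendstoInDistribution_inv_sqrt_smul_sum_pi [FiniteDimensional ℝ E]
    [IsProbabilityMeasure P'] {X : Ω → E} (hX : MemLp X 2 P) (hX0 : P[X] = 0) {Z : Ω' → E}
    (hZ : AEMeasurable Z P')
    (charFun_Z : ∀ s, charFun (P'.map Z) s = Complex.exp (-(∫ ω, ⟪X ω, s⟫ ^ 2 ∂P : ℝ) / 2)) :
    TendstoInDistribution (fun (d : ℕ) (ω : Fin d → Ω) => (√d)⁻¹ • ∑ k, X (ω k)) atTop Z
      (fun _ => Measure.pi fun _ => P) P' where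
  forall_aemeasurable d := (Finset.aemeasurable_fun_sum _ fun k _ =>
    hX.aemeasurable.comp_quasiMeasurePreserving
      (Measure.quasiMeasurePreserving_eval _ k)).const_smul _
  tendsto := by
    refine ProbabilityMeasure.tendsto_of_tendsto_charFun fun s => ?_
    have inner_mean_zero : ∫ ω, ⟪X ω, s⟫ ∂P = 0 := by
      simp only [real_inner_comm s]
      rw [integral_inner (hX.integrable one_le_two), hX0, inner_zero_right]
    have scalar_clt :=
      tendsto_charFun_map_inv_sqrt_mul_pow (hX.inner_const s) inner_mean_zero 1
    simpa [charFun_map_inv_sqrt_smul_sum_pi hX.aemeasurable, charFun_Z] using scalar_clt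

theorem charFun_map_toLp_pi_gaussianReal (v : NNReal) (s : EuclideanSpace ℝ ι) :
    charFun ((Measure.pi fun _ : ι => gaussianReal 0 v).map (WithLp.toLp 2)) s =
      Complex.exp (-(v * ∑ i, s i ^ 2 : ℝ) / 2) := by
  simp only [charFun_pi, charFun_gaussianReal, ← Complex.exp_sum]
  congr 1
  push_cast
  rw [Finset.mul_sum, ← Finset.sum_neg_distrib, Finset.sum_div]
  exact Finset.sum_congr rfl fun i _ => by ring

theorem tendstoInDistribution_pi_gaussianReal_of_uncorrelated [DecidableEq ι]
    {X : ι → Ω → ℝ} {v : NNReal} (hX : ∀ i, MemLp (X i) 2 P) (hX0 : ∀ i, P[X i] = 0)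
    (hcov : ∀ i j, ∫ ω, X i ω * X j ω ∂P = if i = j then (v : ℝ) else 0) :
    TendstoInDistribution
      (fun (d : ℕ) (ω : Fin d → Ω) (i : ι) => (√d)⁻¹ * ∑ k, X i (ω k)) atTop id
      (fun _ => Measure.pi fun _ => P) (Measure.pi fun _ : ι => gaussianReal 0 v) := by
  have memLp_toLp : MemLp (fun ω => WithLp.toLp 2 fun i => X i ω) 2 P := MemLp.of_eval_piLp hX
  have integral_toLp : ∫ ω, WithLp.toLp 2 (fun i => X i ω) ∂P = 0 := by
    ext i
    rw [eval_integral_piLp]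
    · exact hX0 i
    · exact fun i => (hX i).integrable one_le_two
  have euclidean_clt := tendstoInDistribution_inv_sqrt_smul_sum_pi (E := EuclideanSpace ℝ ι)
    memLp_toLp integral_toLp
    (P' := Measure.pi fun _ : ι => gaussianReal 0 v) (Z := WithLp.toLp 2) (by fun_prop)
    fun s => by
      simp only [charFun_map_toLp_pi_gaussianReal, PiLp.inner_apply, RCLike.inner_apply,
        conj_trivial, integral_sq_sum_mul_of_uncorrelated hX hcov]
  refine (euclidean_clt.continuous_comp (PiLp.continuous_ofLp 2 _)).congr (fun d => ?_) ?_
  · refine .of_forall fun ω => ?_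
    ext i
    simp
  · rfl

end CentralLimitTheorem

section Portmanteau

theorem tendsto_measureReal_preimage_of_null_frontier {ι Ω' E : Type*} {Ω : ι → Type*}
    [∀ i, MeasurableSpace (Ω i)] {μ : ∀ i, Measure (Ω i)} [∀ i, IsProbabilityMeasure (μ i)]
    [MeasurableSpace Ω'] {μ' : Measure Ω'} [IsProbabilityMeasure μ'] {l : Filter ι}
    [TopologicalSpace E] [HasOuterApproxClosed E] [MeasurableSpace E]
    [OpensMeasurableSpace E]
    {X : ∀ i, Ω i → E} {Z : Ω' → E} (hX : TendstoInDistribution X l Z μ μ') {s : Set E}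
    (hs : MeasurableSet s) (hs0 : μ'.map Z (frontier s) = 0) :
    Tendsto (fun i => (μ i).real (X i ⁻¹' s)) l (𝓝 (μ'.real (Z ⁻¹' s))) := by
  have tendsto_law := (ENNReal.tendsto_toReal (measure_ne_top (μ'.map Z) s)).comp
    (ProbabilityMeasure.tendsto_measure_of_null_frontier_of_tendsto' hX.tendsto hs0)
  rw [Measure.map_apply_of_aemeasurable hX.aemeasurable_limit hs] at tendsto_law
  exact tendsto_law.congr fun i => congrArg ENNReal.toReal
    (Measure.map_apply_of_aemeasurable (hX.forall_aemeasurable i) hs)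

theorem frontier_univ_pi_subset {ι : Type*} [Finite ι] {X : ι → Type*}
    [∀ i, TopologicalSpace (X i)] (s : ∀ i, Set (X i)) :
    frontier (Set.univ.pi s) ⊆ ⋃ i, Function.eval i ⁻¹' frontier (s i) := by
  intro x hx
  rw [frontier, closure_pi_set, interior_pi_set Set.finite_univ] at hx
  simp only [Set.mem_sdiff, Set.mem_univ_pi, not_forall] at hx
  obtain ⟨mem_closure, i, notMem_interior⟩ := hx
  exact Set.mem_iUnion.2 ⟨i, mem_closure i, notMem_interior⟩

theorem pi_frontier_univ_pi_eq_zero {ι : Type*} [Fintype ι] {X : ι → Type*}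
    [∀ i, TopologicalSpace (X i)] [∀ i, MeasurableSpace (X i)] {μ : ∀ i, Measure (X i)}
    [∀ i, SigmaFinite (μ i)] {s : ∀ i, Set (X i)} (hs : ∀ i, μ i (frontier (s i)) = 0) :
    Measure.pi μ (frontier (Set.univ.pi s)) = 0 :=
  measure_mono_null (frontier_univ_pi_subset s)
    (measure_iUnion_null fun i => Measure.pi_eval_preimage_null μ (hs i))

end Portmanteau

section Threshold

theorem frontier_setOf_le_iff_subset {α : Type*} [TopologicalSpace α] [LinearOrder α]
    [OrderClosedTopology α] (t : α) (A : Prop) : frontier {y | y ≤ t ↔ A} ⊆ {t} := by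
  by_cases hA : A
  · simp only [hA, iff_true]
    exact frontier_Iic_subset t
  · have compl_Iic_eq : {y | y ≤ t ↔ A} = (Set.Iic t)ᶜ := by
      ext y
      simp [hA]
    rw [compl_Iic_eq, frontier_compl]
    exact frontier_Iic_subset t

theorem setOf_forall_le_iff_eq_univ_pi {α κ : Type*} [LE α] (t : α) (A : κ → Prop) :
    {x : κ → α | ∀ e, x e ≤ t ↔ A e} = Set.univ.pi fun e => {y | y ≤ t ↔ A e} := by
  ext x
  simp

variable {ν : Measure ℝ} [IsProbabilityMeasure ν]

theorem measurableSet_setOf_le_iff (t : ℝ) (A : Prop) : MeasurableSet {y | y ≤ t ↔ A} :=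
  (measurableSet_le measurable_id measurable_const).iff (.const A)

theorem measureReal_setOf_le_iff (t : ℝ) (A : Prop) [Decidable A] :
    ν.real {y | y ≤ t ↔ A} = if A then ν.real (Set.Iic t) else 1 - ν.real (Set.Iic t) := by
  split_ifs with hA
  · simp only [hA, iff_true]
    rfl
  · rw [← probReal_compl_eq_one_sub measurableSet_Iic]
    congr 1
    ext y
    simp [hA]

theorem measureReal_pi_setOf_forall_le_iff {κ : Type*} [Fintype κ] (t : ℝ) (A : κ → Prop)
    [DecidablePred A] :
    (Measure.pi fun _ : κ => ν).real {x | ∀ e, x e ≤ t ↔ A e} =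
      ν.real (Set.Iic t) ^ (Finset.univ.filter A).card *
        (1 - ν.real (Set.Iic t)) ^ (Fintype.card κ - (Finset.univ.filter A).card) := by
  have card_not : (Finset.univ.filter fun e => ¬A e).card =
      Fintype.card κ - (Finset.univ.filter A).card := by
    classical rw [← Finset.compl_filter, Finset.card_compl]
  rw [setOf_forall_le_iff_eq_univ_pi, measureReal_def, Measure.pi_pi, ENNReal.toReal_prod,
    ← card_not]
  simp only [← measureReal_def, measureReal_setOf_le_iff, Finset.prod_ite, Finset.prod_const]

theorem tendsto_measureReal_forall_le_iff {ι κ : Type*} [Fintype κ] {Ω : ι → Type*}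
    [∀ i, MeasurableSpace (Ω i)] {μ : ∀ i, Measure (Ω i)} [∀ i, IsProbabilityMeasure (μ i)]
    {l : Filter ι} [NullSingletonClass ν] {X : ∀ i, Ω i → κ → ℝ}
    (hX : TendstoInDistribution X l id μ (Measure.pi fun _ : κ => ν)) {c : ι → ℝ} {t : ℝ}
    (hc : Tendsto c l (𝓝 t)) (A : κ → Prop) [DecidablePred A] :
    Tendsto (fun i => (μ i).real {ω | ∀ e, X i ω e ≤ c i ↔ A e}) l
      (𝓝 (ν.real (Set.Iic t) ^ (Finset.univ.filter A).card *
        (1 - ν.real (Set.Iic t)) ^ (Fintype.card κ - (Finset.univ.filter A).card))) := by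
  have shift_tendsto : Tendsto (fun i => t - c i) l (𝓝 0) := by
    simpa only [sub_self] using hc.const_sub t
  have shifted : TendstoInDistribution (fun i ω e => X i ω e + (t - c i)) l id μ
      (Measure.pi fun _ : κ => ν) :=
    ((tendstoInDistribution_prodMk_const hX shift_tendsto).continuous_comp
      (g := fun p : (κ → ℝ) × ℝ => fun e => p.1 e + p.2) (by fun_prop)).congr
      (fun _ => .of_forall fun _ => rfl) (.of_forall fun x => by ext; simp)
  have null_frontier : (Measure.pi fun _ : κ => ν).map id
      (frontier {x : κ → ℝ | ∀ e, x e ≤ t ↔ A e}) = 0 := by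
    rw [Measure.map_id, setOf_forall_le_iff_eq_univ_pi]
    exact pi_frontier_univ_pi_eq_zero fun e =>
      measure_mono_null (frontier_setOf_le_iff_subset t (A e)) (measure_singleton t)
  have measurable_box : MeasurableSet {x : κ → ℝ | ∀ e, x e ≤ t ↔ A e} :=
    setOf_forall_le_iff_eq_univ_pi t A ▸ .univ_pi fun e => measurableSet_setOf_le_iff t (A e)
  have tendsto_pattern :=
    tendsto_measureReal_preimage_of_null_frontier shifted measurable_box null_frontier
  rw [Set.preimage_id, measureReal_pi_setOf_forall_le_iff] at tendsto_pattern
  refine tendsto_pattern.congr fun i => congrArg (μ i).real ?_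
  ext ω
  simp only [Set.mem_preimage, Set.mem_ofPred_eq, ← le_sub_iff_add_le, sub_sub_cancel]

end Threshold

section IncreasingPair

/-- The pairs `i < j` of vertices. Each one stands for the unordered pair of distinct vertices
`s(i, j)`. -/
abbrev IncreasingPair (V : Type*) [LT V] : Type _ := {p : V × V // p.1 < p.2}

variable {V : Type*} [LinearOrder V] [Fintype V]

theorem card_filter_adj_increasingPair (g : SimpleGraph V) [DecidableRel g.Adj] :
    (Finset.univ.filter fun e : IncreasingPair V => g.Adj e.1.1 e.1.2).card =
      g.edgeFinset.card := by
  refine Finset.card_bij (fun e _ => s(e.1.1, e.1.2)) (fun e he => by simpa using he) ?_ ?_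
  · rintro ⟨⟨a, b⟩, hab : a < b⟩ _ ⟨⟨c, d⟩, hcd : c < d⟩ _ sym2_eq
    obtain ⟨rfl, rfl⟩ | ⟨rfl, rfl⟩ := Sym2.eq_iff.1 sym2_eq
    · rfl
    · exact absurd hab hcd.not_gt
  · rintro ⟨a, b⟩ mem_edges
    have adj : g.Adj a b := by simpa using mem_edges
    obtain hab | hba := adj.ne.lt_or_gt
    · exact ⟨⟨(a, b), hab⟩, by simpa using adj, rfl⟩
    · exact ⟨⟨(b, a), hba⟩, by simpa using adj.symm, Sym2.eq_swap⟩

theorem card_increasingPair : Fintype.card (IncreasingPair V) = (Fintype.card V).choose 2 := by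
  rw [← SimpleGraph.card_edgeFinset_top_eq_card_choose_two, ← card_filter_adj_increasingPair,
    ← Finset.card_univ]
  exact congrArg Finset.card (Finset.filter_true_of_mem fun e _ => e.2.ne).symm

end IncreasingPair

/-- A symmetric square-integrable kernel with vanishing one-point averages: a degenerate kernel in
the sense of U-statistics. Its values on distinct pairs of i.i.d. points are uncorrelated. -/
structure IsDegenerateKernel {S : Type*} [MeasurableSpace S] (h : S → S → ℝ) (μ : Measure S) :
    Prop where
  memLp : MemLp (Function.uncurry h) 2 (μ.prod μ)
  symm : ∀ x y, h x y = h y x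
  integral_eq_zero : ∀ᵐ y ∂μ, ∫ x, h x y ∂μ = 0

namespace IsDegenerateKernel

variable {S V : Type*} [MeasurableSpace S] {h : S → S → ℝ} {μ : Measure S}
  [IsProbabilityMeasure μ] [Fintype V]

theorem memLp_eval (hh : IsDegenerateKernel h μ) {i j : V} (hij : i ≠ j) :
    MemLp (fun u : V → S => h (u i) (u j)) 2 (Measure.pi fun _ => μ) :=
  hh.memLp.comp_measurePreserving (measurePreserving_eval_prodMk (fun _ => μ) hij)

theorem integral_eval_mul_eq_zero [DecidableEq V] (hh : IsDegenerateKernel h μ) {i j : V}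
    (hij : i ≠ j) {G : (V → S) → ℝ} (hG : MemLp G 2 (Measure.pi fun _ => μ))
    (hGi : ∀ u x, G (Function.update u i x) = G u) :
    ∫ u, h (u i) (u j) * G u ∂(Measure.pi fun _ => μ) = 0 := by
  have integrable_mul : Integrable (fun u => h (u i) (u j) * G u) (Measure.pi fun _ => μ) :=
    (hh.memLp_eval hij).integrable_mul hG
  rw [integral_pi_eq_integral_integral_update _ i integrable_mul]
  refine integral_eq_zero_of_ae ?_
  filter_upwards [(Measure.quasiMeasurePreserving_eval (fun _ : V => μ) j).ae
    hh.integral_eq_zero] with u hu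
  simp only [Function.update_self, Function.update_of_ne hij.symm, hGi, integral_mul_const, hu,
    zero_mul, Pi.zero_apply]

theorem integral_eval_eq_zero (hh : IsDegenerateKernel h μ) {i j : V} (hij : i ≠ j) :
    ∫ u : V → S, h (u i) (u j) ∂(Measure.pi fun _ => μ) = 0 := by
  classical
  simpa only [mul_one] using hh.integral_eval_mul_eq_zero hij (memLp_const 1) fun _ _ => rfl

theorem integral_eval_mul_self (hh : IsDegenerateKernel h μ) {i j : V} (hij : i ≠ j) :
    ∫ u : V → S, h (u i) (u j) * h (u i) (u j) ∂(Measure.pi fun _ => μ) =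
      ∫ p, h p.1 p.2 ^ 2 ∂μ.prod μ := by
  have eval_mp := measurePreserving_eval_prodMk (fun _ => μ) hij
  rw [← eval_mp.map_eq, integral_map eval_mp.aemeasurable]
  · simp only [sq]
  · exact eval_mp.map_eq.symm ▸ hh.memLp.aestronglyMeasurable.pow 2

theorem integral_eval_mul_eval (hh : IsDegenerateKernel h μ) {i j a b : V} (hij : i ≠ j)
    (hab : a ≠ b) (hia : i ≠ a) (hib : i ≠ b) :
    ∫ u : V → S, h (u i) (u j) * h (u a) (u b) ∂(Measure.pi fun _ => μ) = 0 := by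
  classical
  exact hh.integral_eval_mul_eq_zero hij (hh.memLp_eval hab) fun u x => by
    rw [Function.update_of_ne hia.symm, Function.update_of_ne hib.symm]

theorem integral_increasingPair_mul [LinearOrder V] (hh : IsDegenerateKernel h μ)
    (e f : IncreasingPair V) :
    ∫ u : V → S, h (u e.1.1) (u e.1.2) * h (u f.1.1) (u f.1.2) ∂(Measure.pi fun _ => μ) =
      if e = f then ∫ p, h p.1 p.2 ^ 2 ∂μ.prod μ else 0 := by
  split_ifs with hef
  · rw [hef, hh.integral_eval_mul_self f.2.ne]
  obtain ⟨⟨i, j⟩, hij : i < j⟩ := e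
  obtain ⟨⟨a, b⟩, hab : a < b⟩ := f
  by_cases hi : i ≠ a ∧ i ≠ b
  · exact hh.integral_eval_mul_eval hij.ne hab.ne hi.1 hi.2
  · have hj : j ≠ a ∧ j ≠ b := by
      grind
    simpa only [hh.symm] using hh.integral_eval_mul_eval hij.ne' hab.ne hj.1 hj.2

variable [LinearOrder V]

theorem tendstoInDistribution_sum (hh : IsDegenerateKernel h μ) {v : NNReal}
    (hv : ∫ p, h p.1 p.2 ^ 2 ∂μ.prod μ = v) :
    TendstoInDistribution
      (fun (d : ℕ) (ω : V → Fin d → S) (e : IncreasingPair V) =>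
        (√d)⁻¹ * ∑ k, h (ω e.1.1 k) (ω e.1.2 k)) atTop id
      (fun _ => Measure.pi fun _ => Measure.pi fun _ => μ)
      (Measure.pi fun _ => gaussianReal 0 v) := by
  have clt := tendstoInDistribution_pi_gaussianReal_of_uncorrelated
    (X := fun (e : IncreasingPair V) (u : V → S) => h (u e.1.1) (u e.1.2))
    (fun e => hh.memLp_eval e.2.ne) (fun e => hh.integral_eval_eq_zero e.2.ne)
    (fun e f => by rw [hh.integral_increasingPair_mul, hv])
  exact tendstoInDistribution_comp_measurePreserving clt
    fun d => measurePreserving_swap_pi fun (_ : V) (_ : Fin d) => μ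

theorem tendsto_measureReal_adj (hh : IsDegenerateKernel h μ) {v : NNReal} (hv0 : v ≠ 0)
    (hv : ∫ p, h p.1 p.2 ^ 2 ∂μ.prod μ = v) {c : ℕ → ℝ} {t : ℝ} (hc : Tendsto c atTop (𝓝 t))
    (g : SimpleGraph V) [DecidableRel g.Adj] :
    Tendsto
      (fun d : ℕ => (Measure.pi fun _ : V => Measure.pi fun _ : Fin d => μ).real
        {ω | ∀ i j, i < j → ((√d)⁻¹ * ∑ k, h (ω i k) (ω j k) ≤ c d ↔ g.Adj i j)}) atTop
      (𝓝 ((gaussianReal 0 v).real (Set.Iic t) ^ g.edgeFinset.card *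
        (1 - (gaussianReal 0 v).real (Set.Iic t)) ^
          ((Fintype.card V).choose 2 - g.edgeFinset.card))) := by
  have : NullSingletonClass (gaussianReal 0 v) := nullSingletonClass_gaussianReal hv0
  simpa only [Subtype.forall, Prod.forall, card_filter_adj_increasingPair, card_increasingPair]
    using tendsto_measureReal_forall_le_iff (hh.tendstoInDistribution_sum hv) hc
      fun e : IncreasingPair V => g.Adj e.1.1 e.1.2

end IsDegenerateKernel

section TorusKernel

instance : IsProbabilityMeasure unif01 :=
  ⟨by simp [unif01]⟩

theorem ae_mem_Icc_unif01 : ∀ᵐ x ∂unif01, x ∈ Set.Icc (0 : ℝ) 1 :=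
  ae_restrict_mem measurableSet_Icc

theorem min_abs_one_sub_abs_eq_abs_sub_round {z : ℝ} (hz : |z| ≤ 1) :
    min |z| (1 - |z|) = |z - round z| := by
  rw [abs_sub_round_eq_min]
  obtain ⟨neg_one_le, le_one⟩ := abs_le.1 hz
  obtain neg | nonneg := lt_or_ge z 0
  · obtain rfl | neg_one_lt := neg_one_le.eq_or_lt
    · norm_num
    · have fract_eq : Int.fract z = z + 1 :=
        Int.fract_eq_iff.2 ⟨by linarith, by linarith, -1, by push_cast; ring⟩
      rw [fract_eq, abs_of_neg neg, min_comm]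
      congr 1 <;> ring
  · obtain rfl | lt_one := le_one.eq_or_lt
    · norm_num
    · rw [Int.fract_eq_self.2 ⟨nonneg, lt_one⟩, abs_of_nonneg nonneg]

theorem periodic_sub_round : Function.Periodic (fun x : ℝ => x - round x) 1 := fun x => by
  simp

theorem integral_interval_comp_abs_sub_round {E : Type*} [NormedAddCommGroup E] [NormedSpace ℝ E]
    (f : ℝ → E) (a : ℝ) :
    ∫ x in a..a + 1, f |x - round x| = ∫ x in (-(1 / 2) : ℝ)..1 / 2, f |x| := by
  have recenter := (periodic_sub_round.comp fun z => f |z|).intervalIntegral_add_eq a (-(1 / 2))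
  rw [show (-(1 / 2) + 1 : ℝ) = 1 / 2 by norm_num] at recenter
  refine recenter.trans ?_
  rw [intervalIntegral.integral_of_le (by norm_num), intervalIntegral.integral_of_le (by norm_num),
    integral_Ioc_eq_integral_Ioo, integral_Ioc_eq_integral_Ioo]
  refine setIntegral_congr_fun measurableSet_Ioo fun x hx => ?_
  have round_eq_zero : round x = 0 := round_eq_zero_iff.2 ⟨hx.1.le.trans' (by norm_num), hx.2⟩
  simp [round_eq_zero]

theorem integral_unif01_comp_min_abs_sub {E : Type*} [NormedAddCommGroup E] [NormedSpace ℝ E]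
    (f : ℝ → E) {y : ℝ} (hy : y ∈ Set.Icc (0 : ℝ) 1) :
    ∫ x, f (min |x - y| (1 - |x - y|)) ∂unif01 = ∫ x in (-(1 / 2) : ℝ)..1 / 2, f |x| := by
  calc ∫ x, f (min |x - y| (1 - |x - y|)) ∂unif01
      = ∫ x in (0 : ℝ)..1, f |x - y - round (x - y)| := by
        rw [unif01, integral_Icc_eq_integral_Ioc, intervalIntegral.integral_of_le zero_le_one]
        refine setIntegral_congr_fun measurableSet_Ioc fun x hx => ?_
        have abs_sub_le_one : |x - y| ≤ 1 :=
          abs_le.2 ⟨by linarith [hx.1, hy.2], by linarith [hx.2, hy.1]⟩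
        exact congrArg f (min_abs_one_sub_abs_eq_abs_sub_round abs_sub_le_one)
    _ = ∫ x in -y..-y + 1, f |x - round x| := by
        rw [intervalIntegral.integral_comp_sub_right (fun x => f |x - round x|), zero_sub,
          sub_eq_neg_add]
    _ = ∫ x in (-(1 / 2) : ℝ)..1 / 2, f |x| := integral_interval_comp_abs_sub_round f (-y)

/-- The contribution of one coordinate to the squared torus distance, centred at its mean `1/12`
under the uniform distribution. -/
noncomputable def torusKernel (x y : ℝ) : ℝ := (min |x - y| (1 - |x - y|)) ^ 2 - 1 / 12

theorem torusKernel_comm (x y : ℝ) : torusKernel x y = torusKernel y x := by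
  rw [torusKernel, torusKernel, abs_sub_comm]

theorem continuous_uncurry_torusKernel : Continuous (Function.uncurry torusKernel) := by
  unfold Function.uncurry torusKernel
  fun_prop

theorem abs_torusKernel_le_one {x y : ℝ} (hx : x ∈ Set.Icc (0 : ℝ) 1)
    (hy : y ∈ Set.Icc (0 : ℝ) 1) : |torusKernel x y| ≤ 1 := by
  have abs_sub_le_one : |x - y| ≤ 1 :=
    abs_le.2 ⟨by linarith [hx.1, hy.2], by linarith [hx.2, hy.1]⟩
  have min_nonneg : 0 ≤ min |x - y| (1 - |x - y|) := le_min (abs_nonneg _) (by linarith)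
  have min_le_one : min |x - y| (1 - |x - y|) ≤ 1 := (min_le_left _ _).trans abs_sub_le_one
  rw [torusKernel, abs_le]
  constructor <;> nlinarith

theorem memLp_torusKernel (p : ENNReal) :
    MemLp (Function.uncurry torusKernel) p (unif01.prod unif01) := by
  refine .of_bound continuous_uncurry_torusKernel.aestronglyMeasurable 1 ?_
  filter_upwards [Measure.quasiMeasurePreserving_fst.ae ae_mem_Icc_unif01,
    Measure.quasiMeasurePreserving_snd.ae ae_mem_Icc_unif01] with p hx hy
  exact abs_torusKernel_le_one hx hy

theorem integral_torusKernel {y : ℝ} (hy : y ∈ Set.Icc (0 : ℝ) 1) :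
    ∫ x, torusKernel x y ∂unif01 = 0 := by
  simp only [torusKernel]
  rw [integral_unif01_comp_min_abs_sub (fun s => s ^ 2 - 1 / 12) hy]
  simp only [sq_abs]
  rw [intervalIntegral.integral_sub (Continuous.intervalIntegrable (by fun_prop) _ _)
    intervalIntegrable_const, integral_pow]
  norm_num

theorem integral_torusKernel_sq {y : ℝ} (hy : y ∈ Set.Icc (0 : ℝ) 1) :
    ∫ x, torusKernel x y ^ 2 ∂unif01 = 1 / 180 := by
  have expand (x : ℝ) : (x ^ 2 - 1 / 12) ^ 2 = x ^ 4 - 1 / 6 * x ^ 2 + 1 / 144 := by ring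
  simp only [torusKernel]
  rw [integral_unif01_comp_min_abs_sub (fun s => (s ^ 2 - 1 / 12) ^ 2) hy]
  simp only [sq_abs, expand]
  rw [intervalIntegral.integral_add (Continuous.intervalIntegrable (by fun_prop) _ _)
      intervalIntegrable_const,
    intervalIntegral.integral_sub (Continuous.intervalIntegrable (by fun_prop) _ _)
      (Continuous.intervalIntegrable (by fun_prop) _ _),
    intervalIntegral.integral_const_mul, integral_pow, integral_pow]
  norm_num

theorem isDegenerateKernel_torusKernel : IsDegenerateKernel torusKernel unif01 where
  memLp := memLp_torusKernel 2
  symm := torusKernel_comm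
  integral_eq_zero := ae_mem_Icc_unif01.mono fun _ => integral_torusKernel

theorem integral_prod_torusKernel_sq :
    ∫ p, torusKernel p.1 p.2 ^ 2 ∂unif01.prod unif01 = 1 / 180 := by
  rw [integral_prod_symm (fun p => torusKernel p.1 p.2 ^ 2) (memLp_torusKernel 2).integrable_sq,
    integral_congr_ae (ae_mem_Icc_unif01.mono fun _ => integral_torusKernel_sq)]
  simp

theorem torusDist_le_iff {d : ℕ} (hd : d ≠ 0) {r : ℝ} (hr : 0 ≤ r) (x y : Fin d → ℝ) :
    torusDist d x y ≤ r ↔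
      (√d)⁻¹ * ∑ k, torusKernel (x k) (y k) ≤ (r ^ 2 - d / 12) / √d := by
  have sqrt_pos : 0 < √(d : ℝ) := Real.sqrt_pos.2 (by positivity)
  have sum_torusKernel : ∑ k, torusKernel (x k) (y k) =
      ∑ k, (min |x k - y k| (1 - |x k - y k|)) ^ 2 - d / 12 := by
    simp [torusKernel, Finset.sum_sub_distrib, div_eq_mul_inv]
  rw [torusDist, Real.sqrt_le_left hr, sum_torusKernel, inv_mul_eq_div,
    div_le_div_iff_of_pos_right sqrt_pos, sub_le_sub_iff_right]

end TorusKernel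

/-- The hard RGG on `n` i.i.d. uniform points in the `d`-dimensional torus, with connection
radius `r₀(d)` satisfying `(r₀(d)² − d/12)/√d → t`, converges in distribution to the
Erdős–Rényi ensemble `G(n, p̄(t))`: the probability of each labelled graph `g` with `k`
edges tends to `p̄(t)^k (1−p̄(t))^(n(n−1)/2−k)`. -/
theorem stmt_13 (n : ℕ) (hn : 2 ≤ n) (t : ℝ) (r₀ : ℕ → ℝ)
    (hpos : ∀ d, 0 < r₀ d)
    (ht : Tendsto (fun d : ℕ => (r₀ d ^ 2 - d / 12) / Real.sqrt d) atTop (𝓝 t))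
    (g : SimpleGraph (Fin n)) [DecidableRel g.Adj] :
    Tendsto
      (fun d : ℕ =>
        (cubeLaw n d {ω | ∀ i j : Fin n, i < j →
            (torusDist d (ω i) (ω j) ≤ r₀ d ↔ g.Adj i j)}).toReal)
      atTop
      (𝓝 (pbar t ^ g.edgeFinset.card *
        (1 - pbar t) ^ (n * (n - 1) / 2 - g.edgeFinset.card))) := by
  have tendsto_adj := isDegenerateKernel_torusKernel.tendsto_measureReal_adj
    (v := 1 / 180) (by norm_num) (by rw [integral_prod_torusKernel_sq]; norm_num) ht g
  rw [Fintype.card_fin, Nat.choose_two_right] at tendsto_adj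
  refine tendsto_adj.congr' ?_
  filter_upwards [eventually_ne_atTop 0] with d hd
  simp only [torusDist_le_iff hd (hpos d).le]
  rfl
end

section
/- Let n ≥ 2. Let U₁, …, U_n be i.i.d. centered Gaussian random variables of variance 1/180 and, independently, let (V_{ij})_{1≤i<j≤n} be i.i.d. centered Gaussian random variables of variance 1/36; set Z_{ij} = U_i + U_j + V_{ij}. For t ∈ ℝ, let G_t be the random labelled graph on {1,…,n} with an edge between i and j exactly when Z_{ij} ≤ t, and let H(t) = −Σ_g P(G_t = g) log₂ P(G_t = g). Then: (i) for every graph g, P(G_0 = g) = P(G_0 = gᶜ), where gᶜ is the complement of g; (ii) the average edge density at t = 0 equals 1/2, i.e. E[|E(G_0)|] = n(n−1)/4; and (iii) H is differentiable at 0 with H′(0) = 0, so t = 0 is a stationary point of the entropy of the limiting hard RGG ensemble in the cube. -/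
open MeasureTheory ProbabilityTheory

/-- Index type of (unordered) pairs `i < j` of nodes. -/
abbrev Pairs (n : ℕ) := {p : Fin n × Fin n // p.1 < p.2}

/-- The joint law of the independent Gaussians `U₁,…,U_n` (variance `1/180`) and
`(V_{ij})_{i<j}` (variance `1/36`). -/
noncomputable def cubeGaussLaw (n : ℕ) : Measure ((Fin n → ℝ) × (Pairs n → ℝ)) :=
  (Measure.pi fun _ : Fin n => gaussianReal 0 (1/180 : NNReal)).prod
    (Measure.pi fun _ : Pairs n => gaussianReal 0 (1/36 : NNReal))

/-- `Z_{ij} = U_i + U_j + V_{ij}`, the limiting normalised squared distances in the cube. -/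
noncomputable def Zvar (n : ℕ) (ω : (Fin n → ℝ) × (Pairs n → ℝ)) (q : Pairs n) : ℝ :=
  ω.1 q.1.1 + ω.1 q.1.2 + ω.2 q

/-- `P(G_t = g)` for the limiting hard RGG in the cube: edge `(i,j)` present iff `Z_{ij} ≤ t`. -/
noncomputable def limProb (n : ℕ) (t : ℝ) (g : SimpleGraph (Fin n)) : ℝ :=
  (cubeGaussLaw n {ω | ∀ q : Pairs n, (Zvar n ω q ≤ t ↔ g.Adj q.1.1 q.1.2)}).toReal

/-- The Shannon entropy (base 2) of the limiting hard RGG ensemble in the cube. -/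
noncomputable def limEntropy (n : ℕ) (t : ℝ) : ℝ :=
  -∑ g : SimpleGraph (Fin n), limProb n t g * Real.logb 2 (limProb n t g)

/-!
The law of `ω = (U, V)` is invariant under `ω ↦ -ω`, which sends `Z` to `-Z`; since no `Z_{ij}` has
an atom, this exchanges `G_t` with the complement of `G_{-t}`. At `t = 0` each graph is therefore as
likely as its complement, and averaging `|E(g)| + |E(gᶜ)| = n(n-1)/2` gives the edge density.
Moreover the entropy is an even function of `t`, so its derivative at `0` vanishes as soon as it
exists. Conditionally on `U` the edges are independent, so `P(G_t = g)` is an average over `U` of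
products of shifted Gaussian distribution functions, hence differentiable in `t`. It is also
positive, so `p ↦ p log p` is differentiable along it.
-/

section Calculus

theorem hasDerivAt_zero_of_even {E : Type*} [NormedAddCommGroup E] [NormedSpace ℝ E] {f : ℝ → E}
    (hf : Function.Even f) (hd : DifferentiableAt ℝ f 0) : HasDerivAt f 0 0 := by
  have hderiv : deriv f 0 = -deriv f 0 := by
    calc deriv f 0 = deriv (fun t => f (-t)) 0 := by rw [funext hf]
      _ = -deriv f 0 := by rw [deriv_comp_neg, neg_zero]
  have : IsAddTorsionFree E := .of_isTorsionFree ℝ E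
  simpa only [self_eq_neg.mp hderiv] using hd.hasDerivAt

theorem hasDerivAt_integral_Iic {E : Type*} [NormedAddCommGroup E] [NormedSpace ℝ E]
    [CompleteSpace E] {f : ℝ → E} (hf : Integrable f) (hc : Continuous f) (x : ℝ) :
    HasDerivAt (fun y => ∫ z in Set.Iic y, f z) (f x) x := by
  have hsplit (y : ℝ) :
      ∫ z in Set.Iic y, f z = (∫ z in (0 : ℝ)..y, f z) + ∫ z in Set.Iic (0 : ℝ), f z := by
    rw [← intervalIntegral.integral_Iic_sub_Iic hf.integrableOn hf.integrableOn, sub_add_cancel]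
  rw [funext hsplit]
  exact (hc.integral_hasStrictDerivAt 0 x).hasDerivAt.add_const _

theorem norm_prod_le_one {Q 𝕜 : Type*} [NormedField 𝕜] {S : Finset Q} {f : Q → 𝕜}
    (hf : ∀ q ∈ S, ‖f q‖ ≤ 1) : ‖∏ q ∈ S, f q‖ ≤ 1 := by
  rw [norm_prod]
  exact Finset.prod_le_one (fun _ _ => norm_nonneg _) hf

theorem differentiable_integral_prod_sub {α Q : Type*} [MeasurableSpace α] [Fintype Q]
    (μ : Measure α) [IsFiniteMeasure μ] {s : α → Q → ℝ} {F : Q → ℝ → ℝ} {C : ℝ}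
    (hF : ∀ q x, ‖F q x‖ ≤ 1) (hd : ∀ q, Differentiable ℝ (F q))
    (hC : ∀ q x, ‖deriv (F q) x‖ ≤ C) (hs : Measurable s) :
    Differentiable ℝ fun t => ∫ u, ∏ q, F q (t - s u q) ∂μ := by
  classical
  intro t₀
  have hsub (t : ℝ) (q : Q) : Measurable fun u => t - s u q :=
    measurable_const.sub ((measurable_pi_apply q).comp hs)
  have hFs (t : ℝ) (q : Q) : Measurable fun u => F q (t - s u q) :=
    (hd q).continuous.measurable.comp (hsub t q)
  have hmeas (t : ℝ) (S : Finset Q) : Measurable fun u => ∏ q ∈ S, F q (t - s u q) :=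
    Finset.measurable_fun_prod S fun q _ => hFs t q
  let F' : ℝ → α → ℝ := fun t u => ∑ q,
    (∏ r ∈ Finset.univ.erase q, F r (t - s u r)) • deriv (F q) (t - s u q)
  have hF'meas : Measurable (F' t₀) := Finset.measurable_fun_sum _ fun q _ =>
    (hmeas t₀ _).smul ((measurable_deriv (F q)).comp (hsub t₀ q))
  have hF'bound (t : ℝ) (u : α) : ‖F' t u‖ ≤ ∑ _q : Q, C :=
    norm_sum_le_of_le _ fun q _ => by
      rw [norm_smul]
      exact (mul_le_of_le_one_left (norm_nonneg _) (norm_prod_le_one fun r _ => hF r _)).trans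
        (hC q _)
  have hderiv (t : ℝ) (u : α) : HasDerivAt (fun t => ∏ q, F q (t - s u q)) (F' t u) t :=
    HasDerivAt.fun_finsetProd fun q _ => (hd q _).hasDerivAt.comp_sub_const t (s u q)
  exact (hasDerivAt_integral_of_dominated_loc_of_deriv_le Filter.univ_mem
    (.of_forall fun t => (hmeas t _).aestronglyMeasurable)
    (.of_bound (hmeas t₀ _).aestronglyMeasurable 1
      (.of_forall fun _ => norm_prod_le_one fun q _ => hF q _))
    hF'meas.aestronglyMeasurable (.of_forall fun u t _ => hF'bound t u) (integrable_const _)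
    (.of_forall fun u t _ => hderiv t u)).2.differentiableAt

end Calculus

section Gaussian

variable (m : ℝ) {v : NNReal}

instance isNegInvariant_gaussianReal_zero (v : NNReal) : (gaussianReal 0 v).IsNegInvariant where
  neg_eq_self := gaussianReal_map_neg.trans (by rw [neg_zero])

theorem isOpenPosMeasure_gaussianReal (hv : v ≠ 0) : (gaussianReal m v).IsOpenPosMeasure :=
  (gaussianReal_absolutelyContinuous' m hv).isOpenPosMeasure

theorem hasDerivAt_cdf_gaussianReal (hv : v ≠ 0) (x : ℝ) :
    HasDerivAt (cdf (gaussianReal m v)) (gaussianPDFReal m v x) x := by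
  have hcdf : ⇑(cdf (gaussianReal m v)) = fun y => ∫ z in Set.Iic y, gaussianPDFReal m v z := by
    ext y
    rw [cdf_eq_real, measureReal_def, gaussianReal_apply_eq_integral m hv,
      ENNReal.toReal_ofReal (integral_nonneg fun _ => gaussianPDFReal_nonneg m v _)]
  have hcont : Continuous (gaussianPDFReal m v) := by
    rw [gaussianPDFReal_def]
    fun_prop
  exact hcdf ▸ hasDerivAt_integral_Iic (integrable_gaussianPDFReal m v) hcont x

theorem gaussianPDFReal_le_inv_sqrt (v : NNReal) (x : ℝ) :
    gaussianPDFReal m v x ≤ (√(2 * Real.pi * v))⁻¹ := by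
  refine mul_le_of_le_one_right (by positivity) (Real.exp_le_one_iff.2 ?_)
  rw [neg_div]
  exact neg_nonpos.2 (by positivity)

theorem norm_deriv_cdf_gaussianReal_le (hv : v ≠ 0) (x : ℝ) :
    ‖deriv (cdf (gaussianReal m v)) x‖ ≤ (√(2 * Real.pi * v))⁻¹ := by
  rw [(hasDerivAt_cdf_gaussianReal m hv x).deriv,
    Real.norm_of_nonneg (gaussianPDFReal_nonneg m v x)]
  exact gaussianPDFReal_le_inv_sqrt m v x

end Gaussian

section ThresholdEvent

/-- The event that the coordinates of the random vector `X` lying below the level `t` are exactly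
those prescribed by the pattern `b`. For `X = Z` and `b` the adjacency relation of `g` this is
`{G_t = g}`. -/
def thresholdEvent {Ω Q : Type*} (X : Ω → Q → ℝ) (t : ℝ) (b : Q → Prop) : Set Ω :=
  {ω | ∀ q, X ω q ≤ t ↔ b q}

variable {Ω Q : Type*} {X : Ω → Q → ℝ}

theorem measurableSet_thresholdEvent [MeasurableSpace Ω] [Countable Q] (hX : Measurable X) (t : ℝ)
    (b : Q → Prop) : MeasurableSet (thresholdEvent X t b) := by
  rw [thresholdEvent, Set.ofPred_forall]
  exact .iInter fun q => .iff
    (measurableSet_le ((measurable_pi_apply q).comp hX) measurable_const) (.const _)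

theorem measureReal_thresholdEvent_neg [MeasurableSpace Ω] [Countable Q] {μ : Measure Ω}
    {T : Ω → Ω} (hT : MeasurePreserving T μ μ) (hX : Measurable X) (hXT : ∀ ω, X (T ω) = -X ω)
    {t : ℝ} (ht : ∀ q, ∀ᵐ ω ∂μ, X ω q ≠ t) (b : Q → Prop) :
    μ.real (thresholdEvent X (-t) b) = μ.real (thresholdEvent X t fun q => ¬ b q) := by
  rw [← hT.measureReal_preimage (measurableSet_thresholdEvent hX _ _).nullMeasurableSet]
  refine measureReal_congr (Filter.eventuallyEq_set.2 ?_)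
  filter_upwards [ae_all_iff.2 ht] with ω hω
  refine forall_congr' fun q => ?_
  have hstrict : t ≤ X ω q ↔ ¬ X ω q ≤ t := by
    rw [not_le, (hω q).symm.le_iff_lt]
  rw [hXT, Pi.neg_apply, neg_le_neg_iff, hstrict]
  exact not_iff_comm.trans iff_comm

theorem measure_thresholdEvent_pos [TopologicalSpace Ω] [MeasurableSpace Ω] [Finite Q]
    (μ : Measure Ω) [μ.IsOpenPosMeasure] (hX : Continuous X) (hsurj : Function.Surjective X)
    (t : ℝ) (b : Q → Prop) : 0 < μ (thresholdEvent X t b) := by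
  classical
  let I : Q → Set ℝ := fun q => if b q then Set.Iio t else Set.Ioi t
  have hI_open (q : Q) : IsOpen (I q) := by
    by_cases hb : b q <;> simp only [I, hb, if_true, if_false, isOpen_Iio, isOpen_Ioi]
  have hI_nonempty (q : Q) : (I q).Nonempty := by
    by_cases hb : b q <;> simp only [I, hb, if_true, if_false, Set.nonempty_Iio, Set.nonempty_Ioi]
  have hI_subset : X ⁻¹' Set.univ.pi I ⊆ thresholdEvent X t b := by
    intro ω hω q
    have hq : X ω q ∈ I q := hω q (Set.mem_univ q)
    by_cases hb : b q
    · simp only [I, hb, if_true, Set.mem_Iio] at hq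
      exact iff_of_true hq.le hb
    · simp only [I, hb, if_false, Set.mem_Ioi] at hq
      exact iff_of_false hq.not_ge hb
  have hopen : IsOpen (X ⁻¹' Set.univ.pi I) :=
    (isOpen_set_pi Set.finite_univ fun q _ => hI_open q).preimage hX
  have hnonempty : (X ⁻¹' Set.univ.pi I).Nonempty :=
    (Set.univ_pi_nonempty_iff.2 hI_nonempty).preimage hsurj
  exact (hopen.measure_pos μ hnonempty).trans_le (measure_mono hI_subset)

end ThresholdEvent

section SideProb

/-- The `ν`-probability of lying on a prescribed side of the level `x`: below `x` if `b` holds,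
above `x` otherwise. It is the conditional probability of the state `b` of a single edge. -/
noncomputable def sideProb (ν : Measure ℝ) (b : Prop) (x : ℝ) : ℝ :=
  ν.real {y | y ≤ x ↔ b}

variable (ν : Measure ℝ) [IsProbabilityMeasure ν]

theorem sideProb_of_pos {b : Prop} (hb : b) : sideProb ν b = cdf ν := by
  ext x
  simp only [sideProb, hb, iff_true, cdf_eq_real, Set.Iic]

theorem sideProb_of_neg {b : Prop} (hb : ¬ b) : sideProb ν b = fun x => 1 - cdf ν x := by
  ext x
  rw [cdf_eq_real, ← probReal_compl_eq_one_sub measurableSet_Iic]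
  simp only [sideProb, hb, iff_false, Set.Iic, Set.compl_ofPred]

theorem norm_sideProb_le_one (b : Prop) (x : ℝ) : ‖sideProb ν b x‖ ≤ 1 := by
  rw [sideProb, Real.norm_of_nonneg measureReal_nonneg]
  exact measureReal_le_one

theorem norm_deriv_sideProb (b : Prop) (x : ℝ) :
    ‖deriv (sideProb ν b) x‖ = ‖deriv (cdf ν) x‖ := by
  by_cases hb : b
  · rw [sideProb_of_pos ν hb]
  · rw [sideProb_of_neg ν hb, deriv_const_sub, norm_neg]

variable {ν}

theorem differentiable_sideProb (hν : Differentiable ℝ (cdf ν)) (b : Prop) :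
    Differentiable ℝ (sideProb ν b) := by
  by_cases hb : b
  · rwa [sideProb_of_pos ν hb]
  · rw [sideProb_of_neg ν hb]
    exact hν.const_sub 1

end SideProb

section AdditiveNoise

variable {α Q : Type*} [MeasurableSpace α] [Fintype Q] (μ : Measure α) (ν : Q → Measure ℝ)
  {s : α → Q → ℝ}

theorem ae_add_ne [∀ q, SigmaFinite (ν q)] (hs : Measurable s) (t : ℝ) (q : Q)
    [NullSingletonClass (ν q)] :
    ∀ᵐ ω ∂μ.prod (Measure.pi ν), s ω.1 q + ω.2 q ≠ t := by
  have hmeas : MeasurableSet {ω : α × (Q → ℝ) | s ω.1 q + ω.2 q ≠ t} :=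
    (measurableSet_eq_fun (by fun_prop) measurable_const).compl
  refine Measure.ae_prod_iff_ae_ae hmeas |>.2 (.of_forall fun u => ?_)
  have hyperplane_null := Measure.pi_hyperplane ν q (t - s u q)
  simpa only [ae_iff, not_not, ← eq_sub_iff_add_eq'] using hyperplane_null

variable [∀ q, IsProbabilityMeasure (ν q)]

theorem measureReal_thresholdEvent_add_eq_integral (hs : Measurable s) (t : ℝ) (b : Q → Prop) :
    (μ.prod (Measure.pi ν)).real (thresholdEvent (fun ω q => s ω.1 q + ω.2 q) t b) =
      ∫ u, ∏ q, sideProb (ν q) (b q) (t - s u q) ∂μ := by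
  have hmeas : MeasurableSet
      (thresholdEvent (fun (ω : α × (Q → ℝ)) q => s ω.1 q + ω.2 q) t b) :=
    measurableSet_thresholdEvent (by fun_prop) t b
  have hsection (u : α) :
      Prod.mk u ⁻¹' thresholdEvent (fun (ω : α × (Q → ℝ)) q => s ω.1 q + ω.2 q) t b =
        Set.univ.pi fun q => {y | y ≤ t - s u q ↔ b q} := by
    ext y
    simp only [thresholdEvent, Set.mem_preimage, Set.mem_ofPred_eq, Set.mem_univ_pi,
      le_sub_iff_add_le']
  rw [measureReal_def, Measure.prod_apply hmeas, ← integral_toReal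
    (measurable_measure_prodMk_left hmeas).aemeasurable (.of_forall fun _ => measure_lt_top _ _)]
  simp only [hsection, Measure.pi_pi, ENNReal.toReal_prod, sideProb, measureReal_def]

theorem differentiable_measureReal_thresholdEvent_add [IsFiniteMeasure μ] {C : ℝ}
    (hs : Measurable s) (hd : ∀ q, Differentiable ℝ (cdf (ν q)))
    (hC : ∀ q x, ‖deriv (cdf (ν q)) x‖ ≤ C) (b : Q → Prop) :
    Differentiable ℝ fun t =>
      (μ.prod (Measure.pi ν)).real (thresholdEvent (fun ω q => s ω.1 q + ω.2 q) t b) := by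
  simp_rw [measureReal_thresholdEvent_add_eq_integral μ ν hs]
  exact differentiable_integral_prod_sub μ (fun q => norm_sideProb_le_one (ν q) (b q))
    (fun q => differentiable_sideProb (hd q) (b q))
    (fun q x => (norm_deriv_sideProb (ν q) (b q) x).trans_le (hC q x)) hs

end AdditiveNoise

section Complement

variable {V : Type*} [Fintype V]

theorem card_edgeSet_add_card_edgeSet_compl (g : SimpleGraph V) :
    (Nat.card g.edgeSet : ℝ) + Nat.card gᶜ.edgeSet =
      (Fintype.card V : ℝ) * (Fintype.card V - 1) / 2 := by
  classical
  have hdisj : Disjoint g.edgeFinset gᶜ.edgeFinset :=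
    SimpleGraph.disjoint_edgeFinset.2 disjoint_compl_right
  have hcard : g.edgeFinset.card + gᶜ.edgeFinset.card = (Fintype.card V).choose 2 := by
    rw [← Finset.card_union_of_disjoint hdisj, ← SimpleGraph.edgeFinset_sup,
      ← SimpleGraph.card_edgeFinset_top_eq_card_choose_two]
    congr! 2
    exact sup_compl_eq_top
  rw [← Nat.cast_choose_two, ← hcard, Nat.cast_add, Nat.card_eq_fintype_card,
    Nat.card_eq_fintype_card, SimpleGraph.card_edgeSet, SimpleGraph.card_edgeSet]

variable [DecidableEq V]

theorem sum_simpleGraph_compl {M : Type*} [AddCommMonoid M] (f : SimpleGraph V → M) :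
    ∑ g, f gᶜ = ∑ g, f g :=
  Equiv.sum_comp (compl_involutive.toPerm _) f

theorem sum_card_edgeSet_mul_of_compl_invariant {p : SimpleGraph V → ℝ} (hsum : ∑ g, p g = 1)
    (hcompl : ∀ g, p g = p gᶜ) :
    ∑ g, (Nat.card g.edgeSet : ℝ) * p g =
      (Fintype.card V : ℝ) * (Fintype.card V - 1) / 4 := by
  have hswap : ∑ g, (Nat.card gᶜ.edgeSet : ℝ) * p g = ∑ g, (Nat.card g.edgeSet : ℝ) * p g := by
    rw [← sum_simpleGraph_compl]
    simp only [compl_compl, ← hcompl]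
  have htotal : ∑ g, ((Nat.card g.edgeSet : ℝ) + Nat.card gᶜ.edgeSet) * p g =
      (Fintype.card V : ℝ) * (Fintype.card V - 1) / 2 := by
    simp_rw [card_edgeSet_add_card_edgeSet_compl]
    rw [← Finset.mul_sum, hsum, mul_one]
  simp_rw [add_mul, Finset.sum_add_distrib, hswap] at htotal
  linarith

end Complement

section LimitGraph

variable (n : ℕ)

instance isProbabilityMeasure_cubeGaussLaw : IsProbabilityMeasure (cubeGaussLaw n) := by
  unfold cubeGaussLaw
  infer_instance

instance isOpenPosMeasure_cubeGaussLaw : (cubeGaussLaw n).IsOpenPosMeasure := by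
  have := isOpenPosMeasure_gaussianReal 0 (v := 1 / 180) (by norm_num)
  have := isOpenPosMeasure_gaussianReal 0 (v := 1 / 36) (by norm_num)
  exact Measure.prod.instIsOpenPosMeasure

theorem measurePreserving_neg_cubeGaussLaw :
    MeasurePreserving (fun ω => -ω) (cubeGaussLaw n) (cubeGaussLaw n) :=
  (Measure.measurePreserving_neg _).prod (Measure.measurePreserving_neg _)

theorem Zvar_neg (ω : (Fin n → ℝ) × (Pairs n → ℝ)) : Zvar n (-ω) = -Zvar n ω := by
  ext q
  simp only [Zvar, Prod.fst_neg, Prod.snd_neg, Pi.neg_apply]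
  ring

theorem continuous_Zvar : Continuous (Zvar n) := by
  unfold Zvar
  fun_prop

theorem surjective_Zvar : Function.Surjective (Zvar n) := fun z =>
  ⟨(0, z), by ext q; simp only [Zvar, Pi.zero_apply, zero_add]⟩

theorem ae_Zvar_ne (t : ℝ) (q : Pairs n) : ∀ᵐ ω ∂cubeGaussLaw n, Zvar n ω q ≠ t := by
  have := nullSingletonClass_gaussianReal (μ := 0) (v := 1 / 36) (by norm_num)
  exact ae_add_ne _ _ (s := fun (u : Fin n → ℝ) (q : Pairs n) => u q.1.1 + u q.1.2)
    (by fun_prop) t q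

theorem limProb_eq_measureReal_thresholdEvent (t : ℝ) (g : SimpleGraph (Fin n)) :
    limProb n t g =
      (cubeGaussLaw n).real (thresholdEvent (Zvar n) t fun q => g.Adj q.1.1 q.1.2) :=
  rfl

theorem limProb_neg (t : ℝ) (g : SimpleGraph (Fin n)) : limProb n (-t) g = limProb n t gᶜ := by
  simp only [limProb_eq_measureReal_thresholdEvent, SimpleGraph.compl_adj]
  rw [measureReal_thresholdEvent_neg (measurePreserving_neg_cubeGaussLaw n)
    (continuous_Zvar n).measurable (Zvar_neg n) (ae_Zvar_ne n t)]
  congr! 3 with q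
  exact (and_iff_right q.2.ne).symm

theorem limProb_pos (t : ℝ) (g : SimpleGraph (Fin n)) : 0 < limProb n t g :=
  ENNReal.toReal_pos (measure_thresholdEvent_pos _ (continuous_Zvar n) (surjective_Zvar n) t _).ne'
    (measure_ne_top _ _)

theorem differentiable_limProb (g : SimpleGraph (Fin n)) :
    Differentiable ℝ fun t => limProb n t g :=
  have hv : (1 / 36 : NNReal) ≠ 0 := by norm_num
  differentiable_measureReal_thresholdEvent_add _ _
    (s := fun (u : Fin n → ℝ) (q : Pairs n) => u q.1.1 + u q.1.2) (by fun_prop)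
    (fun _ x => (hasDerivAt_cdf_gaussianReal 0 hv x).differentiableAt)
    (fun _ => norm_deriv_cdf_gaussianReal_le 0 hv) _

/-- The random graph `G_t`, with an edge between `i < j` exactly when `Z_{ij} ≤ t`. -/
def limGraph (t : ℝ) (ω : (Fin n → ℝ) × (Pairs n → ℝ)) : SimpleGraph (Fin n) :=
  .fromRel fun i j => ∃ h : i < j, Zvar n ω ⟨(i, j), h⟩ ≤ t

theorem limGraph_adj_iff (t : ℝ) (ω : (Fin n → ℝ) × (Pairs n → ℝ)) (q : Pairs n) :
    (limGraph n t ω).Adj q.1.1 q.1.2 ↔ Zvar n ω q ≤ t := by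
  simp [limGraph, q.2, q.2.ne, q.2.not_gt]

variable {n} in
theorem simpleGraph_eq_iff_forall_pairs {g h : SimpleGraph (Fin n)} :
    g = h ↔ ∀ q : Pairs n, g.Adj q.1.1 q.1.2 ↔ h.Adj q.1.1 q.1.2 := by
  refine ⟨fun hgh _ => hgh ▸ Iff.rfl, fun hgh => ?_⟩
  ext i j
  rcases lt_trichotomy i j with hij | rfl | hji
  · exact hgh ⟨(i, j), hij⟩
  · simp only [SimpleGraph.irrefl]
  · simpa only [SimpleGraph.adj_comm] using hgh ⟨(j, i), hji⟩

theorem limGraph_preimage_singleton (t : ℝ) (g : SimpleGraph (Fin n)) :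
    limGraph n t ⁻¹' {g} = thresholdEvent (Zvar n) t fun q => g.Adj q.1.1 q.1.2 := by
  ext ω
  simp only [Set.mem_preimage, Set.mem_singleton_iff, simpleGraph_eq_iff_forall_pairs,
    limGraph_adj_iff, thresholdEvent, Set.mem_ofPred_eq]

theorem sum_limProb (t : ℝ) : ∑ g, limProb n t g = 1 := by
  simp_rw [limProb_eq_measureReal_thresholdEvent, ← limGraph_preimage_singleton]
  rw [sum_measureReal_preimage_singleton]
  · rw [Finset.coe_univ, Set.preimage_univ, probReal_univ]
  · intro g _
    rw [limGraph_preimage_singleton]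
    exact measurableSet_thresholdEvent (continuous_Zvar n).measurable t _

theorem even_limEntropy : Function.Even (limEntropy n) := fun t => by
  simp_rw [limEntropy, limProb_neg]
  rw [sum_simpleGraph_compl fun g => limProb n t g * Real.logb 2 (limProb n t g)]

theorem differentiable_limEntropy : Differentiable ℝ (limEntropy n) := fun t =>
  .fun_neg <| .fun_sum fun g _ =>
    have hp := differentiable_limProb n g t
    hp.fun_mul ((hp.log (limProb_pos n t g).ne').div_const _)

end LimitGraph

/-- For the `d → ∞` limiting hard RGG ensemble in the cube at `t = 0`:
(i) each graph and its complement are equiprobable; (ii) the expected number of edges is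
`n(n−1)/4` (average edge density `1/2`); (iii) the entropy is differentiable at `0` with
derivative `0`, so `t = 0` is a stationary point. -/
theorem stmt_19 (n : ℕ) (hn : 2 ≤ n) :
    (∀ g : SimpleGraph (Fin n), limProb n 0 g = limProb n 0 gᶜ) ∧
    (∑ g : SimpleGraph (Fin n), (Nat.card g.edgeSet : ℝ) * limProb n 0 g
      = (n : ℝ) * ((n : ℝ) - 1) / 4) ∧
    HasDerivAt (fun t : ℝ => limEntropy n t) 0 0 := by
  have hcompl (g : SimpleGraph (Fin n)) : limProb n 0 g = limProb n 0 gᶜ := by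
    simpa only [neg_zero] using limProb_neg n 0 g
  refine ⟨hcompl, ?_, hasDerivAt_zero_of_even (even_limEntropy n) (differentiable_limEntropy n 0)⟩
  simpa only [Fintype.card_fin] using
    sum_card_edgeSet_mul_of_compl_invariant (sum_limProb n 0) hcompl
end
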